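/- Let Ω ⊆ [0,1]ᵐ be a convex set such that for every choice of signs J ∈ {0,1}ᵐ, Ω has nonempty intersection with the subcube D_J = {x ∈ [0,1]ᵐ : x_i ≤ 1/2 if J_i = 0 and x_i ≥ 1/2 if J_i = 1 for all i}. Then the center point (1/2, 1/2, …, 1/2) belongs to Ω (or, if Ω is not closed, to its closure). -/

import Mathlib

/-!
Freeze the coordinates one at a time. Suppose that, with the coordinates in `S` already equal to
those of `c`, the convex set still meets every choice of closed half-lines in the others. For a
further coordinate `a`, choose the same half-lines elsewhere and both half-lines at `a`: the two
points obtained lie in a common convex set and have `a`-th coordinates on either side of `c a`,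
so their segment contains a point where this coordinate is `c a`. Once all coordinates are frozen,
the only point left is `c`, which therefore lies in the set itself, not only in its closure.
-/

open Set

/-- The closed half-line with endpoint `a`, pointing upwards if `b` is `true` and downwards if `b`
is `false`. The products of such half-lines are the closed orthants with a given vertex. -/
def closedHalfLine {α : Type*} [Preorder α] (a : α) (b : Bool) : Set α :=
  if b then Ici a else Iic a

theorem mem_closedHalfLine {α : Type*} [Preorder α] {a x : α} {b : Bool} :
    x ∈ closedHalfLine a b ↔ if b then a ≤ x else x ≤ a := by
  cases b <;> rfl

section OrderedField

variable {𝕜 ι E : Type*} [Field 𝕜] [LinearOrder 𝕜] [IsStrictOrderedRing 𝕜]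

theorem exists_mem_eq_of_convex_of_le_of_le [AddCommGroup E] [Module 𝕜 E] {s : Set E}
    (hs : Convex 𝕜 s) (f : E →ₗ[𝕜] 𝕜) {x y : E} (hx : x ∈ s) (hy : y ∈ s) {a : 𝕜}
    (hxa : f x ≤ a) (hay : a ≤ f y) : ∃ z ∈ s, f z = a :=
  (hs.linear_image f).ordConnected.out (mem_image_of_mem f hx) (mem_image_of_mem f hy) ⟨hxa, hay⟩

theorem nonempty_inter_pi_update_singleton_of_convex [DecidableEq ι] {Ω : Set (ι → 𝕜)}
    (hΩ : Convex 𝕜 Ω) {t : ι → Set 𝕜} {i : ι} (ht : ∀ j ≠ i, Convex 𝕜 (t j)) {a : 𝕜}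
    (hle : (Ω ∩ univ.pi (Function.update t i (Iic a))).Nonempty)
    (hge : (Ω ∩ univ.pi (Function.update t i (Ici a))).Nonempty) :
    (Ω ∩ univ.pi (Function.update t i {a})).Nonempty := by
  have pi_update (u : Set 𝕜) :
      univ.pi (Function.update t i u) = {x | x i ∈ u} ∩ pi {i}ᶜ t :=
    univ_pi_update i t u fun _ v => v
  rw [pi_update] at hle hge ⊢
  obtain ⟨x, hxΩ, hxa, hxt⟩ := hle
  obtain ⟨y, hyΩ, hay, hyt⟩ := hge
  have cylinder_convex : Convex 𝕜 (Ω ∩ pi {i}ᶜ t) := hΩ.inter (convex_pi ht)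
  obtain ⟨z, ⟨hzΩ, hzt⟩, hza⟩ := exists_mem_eq_of_convex_of_le_of_le cylinder_convex
    (LinearMap.proj i) ⟨hxΩ, hxt⟩ ⟨hyΩ, hyt⟩ hxa hay
  exact ⟨z, hzΩ, hza, hzt⟩

theorem convex_closedHalfLine (a : 𝕜) (b : Bool) : Convex 𝕜 (closedHalfLine a b) := by
  cases b
  exacts [convex_Iic a, convex_Ici a]

theorem nonempty_inter_pi_piecewise_singleton_closedHalfLine [DecidableEq ι] {Ω : Set (ι → 𝕜)}
    (hΩ : Convex 𝕜 Ω) {c : ι → 𝕜}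
    (hmeet : ∀ J : ι → Bool, (Ω ∩ univ.pi fun i => closedHalfLine (c i) (J i)).Nonempty)
    (S : Finset ι) (J : ι → Bool) :
    (Ω ∩ univ.pi
      (S.piecewise (fun i => {c i}) fun i => closedHalfLine (c i) (J i))).Nonempty := by
  induction S using Finset.induction_on generalizing J with
  | empty => simpa only [Finset.piecewise_empty] using hmeet J
  | insert a S ha ih =>
    have meets_half (b : Bool) :
        (Ω ∩ univ.pi (Function.update
          (S.piecewise (fun i => {c i}) fun i => closedHalfLine (c i) (J i))
          a (closedHalfLine (c a) b))).Nonempty := by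
      rw [Finset.update_piecewise_of_notMem _ _ _ ha]
      simpa only [Function.apply_update fun i => closedHalfLine (c i)] using
        ih (Function.update J a b)
    rw [Finset.piecewise_insert]
    refine nonempty_inter_pi_update_singleton_of_convex hΩ (fun j _ => ?_)
      (meets_half false) (meets_half true)
    apply S.piecewise_cases
    exacts [convex_singleton (c j), convex_closedHalfLine (c j) (J j)]

theorem stmt_13_general [Finite ι] {Ω : Set (ι → 𝕜)} (hconv : Convex 𝕜 Ω) {c : ι → 𝕜}
    (hmeet : ∀ J : ι → Bool,
      (Ω ∩ {x : ι → 𝕜 | ∀ i, if J i then c i ≤ x i else x i ≤ c i}).Nonempty) :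
    c ∈ Ω := by
  classical
  cases nonempty_fintype ι
  have meets_orthants (J : ι → Bool) :
      (Ω ∩ univ.pi fun i => closedHalfLine (c i) (J i)).Nonempty := by
    simpa only [Set.pi, mem_univ, true_imp_iff, mem_closedHalfLine] using hmeet J
  have meets_vertex := nonempty_inter_pi_piecewise_singleton_closedHalfLine hconv meets_orthants
    Finset.univ fun _ => true
  rwa [Finset.piecewise_univ, univ_pi_singleton, inter_singleton_nonempty] at meets_vertex

end OrderedField

theorem stmt_13 (m : ℕ) (Ω : Set (Fin m → ℝ)) (hconv : Convex ℝ Ω)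
    (hsub : Ω ⊆ Set.Icc (0 : Fin m → ℝ) 1)
    (hmeet : ∀ J : Fin m → Bool,
      (Ω ∩ {x : Fin m → ℝ | ∀ i, if J i then 1/2 ≤ x i else x i ≤ 1/2}).Nonempty) :
    (fun _ => (1/2 : ℝ)) ∈ closure Ω :=
  subset_closure (stmt_13_general hconv hmeet)
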